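/- arXiv:2007.12267 — 2 statements merged into one kernel-verified Lean document; each statement's English description precedes it below -/
import Mathlib

section
/- Let n ≥ 2 and k₀ ≥ 1 be integers and d a rational number. For 1 ≤ i ≤ n set bᵢ := k₀+i, dᵢ := (1/(n−1)!)·Π_{j≠i}(k₀+j), and x̄ᵢ := (−1)^{i−1}·binom(n−1, i−1)·(dᵢ − d). Then: (i) Σ_{i=1}^{n} x̄ᵢ = 1; (ii) Σ_{i=1}^{n} x̄ᵢ·(bᵢ)^p = 0 for every integer p with 1 ≤ p ≤ n−2; (iii) Σ_{i=1}^{n} x̄ᵢ·(bᵢ)^{n−1} = (−1)^n·(n−1)!·d. -/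
/-- The rational number `dᵢ := (1/(n−1)!)·Π_{1 ≤ j ≤ n, j ≠ i} (k₀+j)`. -/
def dQ (n k₀ i : ℕ) : ℚ :=
  (1 / (n - 1).factorial) * ∏ j ∈ (Finset.Icc 1 n).erase i, ((k₀ : ℚ) + j)

/-- The explicit solution `x̄ᵢ := (−1)^{i−1}·binom(n−1, i−1)·(dᵢ − d)`
of the Vandermonde system, where `bᵢ := k₀ + i`. -/
def xbar (n k₀ : ℕ) (d : ℚ) (i : ℕ) : ℚ :=
  (-1) ^ (i - 1) * ((n - 1).choose (i - 1) : ℚ) * (dQ n k₀ i - d)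

open Finset

/-- The alternating binomial sum of the values of `f` at `y, y + 1, …, y + m` is, up to sign,
an iterated forward difference. -/
lemma sum_alternating_choose_eq_fwdDiff (f : ℚ → ℚ) (m : ℕ) (y : ℚ) :
    ∑ i ∈ range (m + 1), (-1) ^ i * (m.choose i : ℚ) * f (y + i) = (-1) ^ m * (fwdDiff (1 : ℚ))^[m] f y := by
  rw [fwdDiff_iter_eq_sum_shift, mul_sum]
  refine sum_congr rfl fun i hi => ?_
  obtain ⟨c, rfl⟩ := Nat.exists_eq_add_of_le (Nat.lt_succ_iff.mp (mem_range.mp hi))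
  have hc : ((-1 : ℚ) ^ c) * (-1) ^ c = 1 := by rw [← mul_pow]; simp
  simp only [Nat.add_sub_cancel_left, zsmul_eq_mul, nsmul_eq_mul, mul_one]
  push_cast
  rw [pow_add]
  linear_combination (-(-1) ^ i * ((i + c).choose i : ℚ) * f (y + i)) * hc

lemma sum_alternating_choose_mul_pow_of_lt {m p : ℕ} (h : p < m) (y : ℚ) :
    ∑ i ∈ range (m + 1), (-1) ^ i * (m.choose i : ℚ) * (y + i) ^ p = 0 := by
  rw [sum_alternating_choose_eq_fwdDiff (fun r => r ^ p), fwdDiff_iter_pow_eq_zero_of_lt h]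
  simp

lemma sum_alternating_choose_mul_pow_self (m : ℕ) (y : ℚ) :
    ∑ i ∈ range (m + 1), (-1) ^ i * (m.choose i : ℚ) * (y + i) ^ m = (-1) ^ m * m.factorial := by
  rw [sum_alternating_choose_eq_fwdDiff (fun r => r ^ m), fwdDiff_iter_eq_factorial]
  simp

lemma fwdDiff_iter_inv (m : ℕ) {y : ℚ} (hy : 0 < y) :
    (fwdDiff (1 : ℚ))^[m] (fun r : ℚ => r⁻¹) y =
      (-1) ^ m * m.factorial * (∏ j ∈ range (m + 1), (y + j))⁻¹ := by
  induction m generalizing y with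
  | zero => simp
  | succ m ih =>
    rw [Function.iterate_succ_apply', fwdDiff, ih hy, ih (by positivity)]
    have hpos : ∀ {z : ℚ}, 0 < z → (∏ j ∈ range (m + 1), (z + j)) ≠ 0 := fun hz =>
      (prod_pos fun j _ => by positivity).ne'
    have hlast := prod_range_succ (fun j : ℕ => y + j) (m + 1)
    have hfirst : ∏ j ∈ range (m + 1 + 1), (y + j) =
        (∏ j ∈ range (m + 1), (y + 1 + j)) * y := by
      rw [prod_range_succ']
      simp [add_assoc, add_comm (1 : ℚ)]
    have h₀ := hpos hy
    have h₁ := hpos (z := y + 1) (by positivity)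
    have hm : y + ((m + 1 : ℕ) : ℚ) ≠ 0 := by positivity
    have hinv₁ : (∏ j ∈ range (m + 1), (y + 1 + j))⁻¹ =
        y * (∏ j ∈ range (m + 1 + 1), (y + j))⁻¹ := by
      rw [hfirst]; field_simp
    have hinv₀ : (∏ j ∈ range (m + 1), (y + j))⁻¹ =
        (y + ((m + 1 : ℕ) : ℚ)) * (∏ j ∈ range (m + 1 + 1), (y + j))⁻¹ := by
      rw [hlast]; field_simp
    rw [hinv₀, hinv₁, Nat.factorial_succ]
    push_cast
    ring

lemma sum_alternating_choose_mul_inv (m : ℕ) {y : ℚ} (hy : 0 < y) :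
    ∑ i ∈ range (m + 1), (-1) ^ i * (m.choose i : ℚ) * (y + i)⁻¹ =
      m.factorial * (∏ j ∈ range (m + 1), (y + j))⁻¹ := by
  rw [sum_alternating_choose_eq_fwdDiff (fun r => r⁻¹), fwdDiff_iter_inv m hy, ← mul_assoc,
    ← mul_assoc, ← mul_pow]
  simp

lemma dQ_succ_eq (m k₀ : ℕ) {i : ℕ} (hi : i ∈ range (m + 1)) :
    dQ (m + 1) k₀ (i + 1) =
      (∏ j ∈ range (m + 1), ((k₀ : ℚ) + 1 + j)) / m.factorial * ((k₀ : ℚ) + 1 + i)⁻¹ := by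
  have hmem : i + 1 ∈ Icc 1 (m + 1) := by simp at hi ⊢; omega
  have hprod : ∏ j ∈ range (m + 1), ((k₀ : ℚ) + 1 + j) =
      ∏ j ∈ Icc 1 (m + 1), ((k₀ : ℚ) + j) := by
    rw [← Ico_add_one_right_eq_Icc, prod_Ico_eq_prod_range]
    exact prod_congr rfl fun j _ => by push_cast; ring
  have hi₀ : (k₀ : ℚ) + 1 + i ≠ 0 := by positivity
  rw [hprod, ← mul_prod_erase _ _ hmem, dQ]
  push_cast
  rw [show (k₀ : ℚ) + (i + 1) = k₀ + 1 + i by ring]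
  field_simp

lemma sum_xbar_mul_pow (m k₀ p : ℕ) (d : ℚ) :
    ∑ i ∈ Icc 1 (m + 1), xbar (m + 1) k₀ d i * ((k₀ : ℚ) + i) ^ p =
      (∏ j ∈ range (m + 1), ((k₀ : ℚ) + 1 + j)) / m.factorial *
        ∑ i ∈ range (m + 1), (-1) ^ i * (m.choose i : ℚ) *
          (((k₀ : ℚ) + 1 + i)⁻¹ * ((k₀ : ℚ) + 1 + i) ^ p) -
      d * ∑ i ∈ range (m + 1), (-1) ^ i * (m.choose i : ℚ) * ((k₀ : ℚ) + 1 + i) ^ p := by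
  rw [← Ico_add_one_right_eq_Icc, sum_Ico_eq_sum_range, mul_sum, mul_sum, ← sum_sub_distrib]
  refine sum_congr rfl fun i hi => ?_
  rw [add_comm 1 i, xbar, dQ_succ_eq m k₀ hi]
  push_cast
  rw [show (k₀ : ℚ) + (i + 1) = k₀ + 1 + i by ring]
  ring

lemma sum_xbar_mul_pow_succ (m k₀ p : ℕ) (hp : p < m) (d : ℚ) :
    ∑ i ∈ Icc 1 (m + 1), xbar (m + 1) k₀ d i * ((k₀ : ℚ) + i) ^ (p + 1) =
      -d * ∑ i ∈ range (m + 1), (-1) ^ i * (m.choose i : ℚ) * ((k₀ : ℚ) + 1 + i) ^ (p + 1) := by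
  have hcancel : ∀ i : ℕ, ((k₀ : ℚ) + 1 + i)⁻¹ * ((k₀ : ℚ) + 1 + i) ^ (p + 1) =
      ((k₀ : ℚ) + 1 + i) ^ p := fun i => by
    have hi : (k₀ : ℚ) + 1 + i ≠ 0 := by positivity
    rw [pow_succ']
    field_simp
  rw [sum_xbar_mul_pow]
  simp only [hcancel]
  rw [sum_alternating_choose_mul_pow_of_lt hp]
  ring

theorem stmt_3 (n k₀ : ℕ) (hn : 2 ≤ n) (hk : 1 ≤ k₀) (d : ℚ) :
    (∑ i ∈ Finset.Icc 1 n, xbar n k₀ d i) = 1 ∧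
    (∀ p : ℕ, 1 ≤ p → p ≤ n - 2 →
      (∑ i ∈ Finset.Icc 1 n, xbar n k₀ d i * ((k₀ : ℚ) + i) ^ p) = 0) ∧
    (∑ i ∈ Finset.Icc 1 n, xbar n k₀ d i * ((k₀ : ℚ) + i) ^ (n - 1))
      = (-1) ^ n * (n - 1).factorial * d := by
  obtain ⟨m, rfl⟩ : ∃ m, n = m + 2 := ⟨n - 2, by omega⟩
  refine ⟨?_, fun p hp hpm => ?_, ?_⟩
  · have hy : (0 : ℚ) < (k₀ : ℚ) + 1 := by positivity
    have hprod : ∏ j ∈ range (m + 1 + 1), ((k₀ : ℚ) + 1 + j) ≠ 0 :=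
      (prod_pos fun j _ => by positivity).ne'
    have hfac : ((m + 1).factorial : ℚ) ≠ 0 := by positivity
    have hsum := sum_xbar_mul_pow (m + 1) k₀ 0 d
    have hpow := sum_alternating_choose_mul_pow_of_lt (Nat.succ_pos m) ((k₀ : ℚ) + 1)
    rw [hpow] at hsum
    simp only [pow_zero, mul_one] at hsum
    rw [sum_alternating_choose_mul_inv (m + 1) hy] at hsum
    rw [hsum]
    field_simp
    ring
  · obtain ⟨q, rfl⟩ : ∃ q, p = q + 1 := ⟨p - 1, by omega⟩
    rw [sum_xbar_mul_pow_succ (m + 1) k₀ q (by omega),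
      sum_alternating_choose_mul_pow_of_lt (by omega), mul_zero]
  · have hsum := sum_xbar_mul_pow_succ (m + 1) k₀ m (Nat.lt_succ_self m) d
    rw [sum_alternating_choose_mul_pow_self] at hsum
    rw [show m + 2 - 1 = m + 1 by omega, hsum]
    ring
end

section
/- Let n ≥ 3 and k₀ ≥ 1 be integers, let dᵢ := (1/(n−1)!)·Π_{1 ≤ j ≤ n, j ≠ i}(k₀+j) for 1 ≤ i ≤ n, and let d be an integer with c(n,k₀) ≤ d < c(n,k₀+1). Then there exists a unique index i₀ with 1 ≤ i₀ ≤ n−1 such that d_{i₀+1} ≤ d < d_{i₀}. Moreover, defining xᵢ := binom(n−1, i−1)·(dᵢ − d) for 1 ≤ i ≤ i₀ and xᵢ := binom(n−1, i−1)·(d − dᵢ) for i₀ < i ≤ n, every xᵢ is a nonnegative integer, xᵢ > 0 for all 1 ≤ i ≤ i₀, and xᵢ > 0 for all i₀+1 < i ≤ n. -/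
/-- `c n h` is the dimension of the space of homogeneous polynomials of degree `h`
in `n` variables: `c(n,h) = binom(n-1+h, h)`. -/
def c (n h : ℕ) : ℕ := (n - 1 + h).choose h

open Nat in
theorem factorial_mul_prod_Icc_add (n k : ℕ) :
    (k ! : ℚ) * ∏ j ∈ Finset.Icc 1 n, ((k : ℚ) + j) = ((k + n)! : ℚ) := by
  induction n with
  | zero => simp
  | succ n ih =>
    rw [Finset.prod_Icc_succ_top (by omega), ← mul_assoc, ih, ← add_assoc, Nat.factorial_succ]
    push_cast
    ring

open Nat in
theorem dQ_eq_div {n i : ℕ} (k : ℕ) (hi : 1 ≤ i) (hin : i ≤ n) :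
    dQ n k i = ((k + n)! : ℚ) / (k ! * (n - 1)! * ((k : ℚ) + i)) := by
  have hi' : (0 : ℚ) < i := by exact_mod_cast hi
  have hki : (k : ℚ) + i ≠ 0 := by positivity
  rw [← factorial_mul_prod_Icc_add,
    ← Finset.mul_prod_erase _ _ (Finset.mem_Icc.mpr ⟨hi, hin⟩), dQ]
  have := Nat.factorial_ne_zero k
  have := Nat.factorial_ne_zero (n - 1)
  field_simp

theorem dQ_lt_dQ {n i j : ℕ} (k : ℕ) (hi : 1 ≤ i) (hij : i < j) (hjn : j ≤ n) :
    dQ n k j < dQ n k i := by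
  rw [dQ_eq_div k hi (by omega), dQ_eq_div k (by omega) hjn]
  have hi' : (0 : ℚ) < i := by exact_mod_cast hi
  have hij' : (i : ℚ) < j := by exact_mod_cast hij
  gcongr

theorem dQ_le_dQ {n i j : ℕ} (k : ℕ) (hi : 1 ≤ i) (hij : i ≤ j) (hjn : j ≤ n) :
    dQ n k j ≤ dQ n k i := by
  rcases hij.eq_or_lt with rfl | h
  · exact le_rfl
  · exact (dQ_lt_dQ k hi h hjn).le

theorem dQ_self {n : ℕ} (k : ℕ) (hn : 1 ≤ n) : dQ n k n = c n k := by
  obtain ⟨m, rfl⟩ := Nat.exists_eq_add_of_le' hn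
  rw [dQ_eq_div k hn le_rfl, c, Nat.add_sub_cancel, add_comm m k, Nat.cast_add_choose,
    ← add_assoc, Nat.factorial_succ]
  have := Nat.factorial_ne_zero k
  have := Nat.factorial_ne_zero m
  have : (k : ℚ) + (m + 1) ≠ 0 := by positivity
  push_cast
  field_simp
  ring

theorem dQ_one {n : ℕ} (k : ℕ) (hn : 1 ≤ n) : dQ n k 1 = c n (k + 1) := by
  obtain ⟨m, rfl⟩ := Nat.exists_eq_add_of_le' hn
  rw [dQ_eq_div k le_rfl hn, c, Nat.add_sub_cancel, add_comm m (k + 1), Nat.cast_add_choose,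
    Nat.factorial_succ k, show k + 1 + m = k + (m + 1) by ring]
  push_cast
  congr 1
  ring

theorem choose_mul_dQ {n i : ℕ} (k : ℕ) (hi : 1 ≤ i) (hin : i ≤ n) :
    ((n - 1).choose (i - 1) : ℚ) * dQ n k i =
      ((k + (i - 1)).choose (i - 1) * (k + n).choose (n - i) : ℕ) := by
  obtain ⟨a, rfl⟩ := Nat.exists_eq_add_of_le' hi
  obtain ⟨b, rfl⟩ := Nat.exists_eq_add_of_le hin
  rw [dQ_eq_div k hi hin, show a + 1 + b - 1 = a + b by omega,
    show a + 1 + b - (a + 1) = b by omega, show k + (a + 1 + b) = (k + a + 1) + b by ring,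
    Nat.add_sub_cancel, Nat.cast_mul, Nat.cast_add_choose,
    ← Nat.choose_symm_add, Nat.cast_add_choose, ← Nat.choose_symm_add, Nat.cast_add_choose,
    Nat.factorial_succ (k + a)]
  have := Nat.factorial_ne_zero k
  have := Nat.factorial_ne_zero a
  have := Nat.factorial_ne_zero b
  have := Nat.factorial_ne_zero (a + b)
  have := Nat.factorial_ne_zero (k + a)
  have : (k : ℚ) + (a + 1) ≠ 0 := by positivity
  have : (k : ℚ) + a + 1 ≠ 0 := by positivity
  push_cast
  field_simp
  ring

/-- A rational in `[dₙ, d₁)` lies in one of the intervals `[dᵢ₊₁, dᵢ)`. -/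
theorem exists_dQ_succ_le_lt {n k : ℕ} {x : ℚ} (hn : 2 ≤ n) (h₁ : dQ n k n ≤ x)
    (h₂ : x < dQ n k 1) :
    ∃ i, 1 ≤ i ∧ i ≤ n - 1 ∧ dQ n k (i + 1) ≤ x ∧ x < dQ n k i := by
  classical
  have hlast : 1 ≤ n - 1 ∧ dQ n k (n - 1 + 1) ≤ x :=
    ⟨by omega, by rwa [Nat.sub_add_cancel (by omega)]⟩
  have hex : ∃ i, 1 ≤ i ∧ dQ n k (i + 1) ≤ x := ⟨_, hlast⟩
  obtain ⟨hpos, hle⟩ := Nat.find_spec hex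
  refine ⟨Nat.find hex, hpos, Nat.find_min' hex hlast, hle, ?_⟩
  rcases hpos.eq_or_lt with h | h
  · rwa [← h]
  · have hmin := Nat.find_min hex (Nat.sub_lt hpos one_pos)
    rw [Nat.sub_add_cancel hpos] at hmin
    by_contra! hx
    exact hmin ⟨by omega, hx⟩

theorem stmt_8 (n k₀ : ℕ) (hn : 3 ≤ n) (hk : 1 ≤ k₀) (d : ℤ)
    (hd₁ : (c n k₀ : ℤ) ≤ d) (hd₂ : d < (c n (k₀ + 1) : ℤ)) :
    (∃! i₀ : ℕ, 1 ≤ i₀ ∧ i₀ ≤ n - 1 ∧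
        dQ n k₀ (i₀ + 1) ≤ (d : ℚ) ∧ (d : ℚ) < dQ n k₀ i₀) ∧
    (∀ i₀ : ℕ, 1 ≤ i₀ → i₀ ≤ n - 1 →
        dQ n k₀ (i₀ + 1) ≤ (d : ℚ) → (d : ℚ) < dQ n k₀ i₀ →
      ∀ i ∈ Finset.Icc 1 n,
        (∃ m : ℕ,
          (if i ≤ i₀ then ((n - 1).choose (i - 1) : ℚ) * (dQ n k₀ i - (d : ℚ))
            else ((n - 1).choose (i - 1) : ℚ) * ((d : ℚ) - dQ n k₀ i)) = (m : ℚ)) ∧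
        (i ≤ i₀ →
          0 < ((n - 1).choose (i - 1) : ℚ) * (dQ n k₀ i - (d : ℚ))) ∧
        (i₀ + 1 < i →
          0 < ((n - 1).choose (i - 1) : ℚ) * ((d : ℚ) - dQ n k₀ i))) := by
  have hlow : dQ n k₀ n ≤ d := by
    rw [dQ_self k₀ (by omega)]
    exact_mod_cast hd₁
  have hhigh : (d : ℚ) < dQ n k₀ 1 := by
    rw [dQ_one k₀ (by omega)]
    exact_mod_cast hd₂
  refine ⟨?_, ?_⟩
  · obtain ⟨i, hi, hin, hle, hlt⟩ := exists_dQ_succ_le_lt (by omega) hlow hhigh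
    refine ⟨i, ⟨hi, hin, hle, hlt⟩, ?_⟩
    rintro j ⟨hj, hjn, hjle, hjlt⟩
    rcases lt_trichotomy j i with h | h | h
    · exact absurd (hlt.trans_le (dQ_le_dQ k₀ (by omega) h (by omega))) hjle.not_gt
    · exact h
    · exact absurd (hjlt.trans_le (dQ_le_dQ k₀ (by omega) h (by omega))) hle.not_gt
  · intro i₀ hi₀ hi₀n hle hlt i hi
    obtain ⟨hi, hin⟩ := Finset.mem_Icc.mp hi
    have hchoose : (0 : ℚ) < (n - 1).choose (i - 1) := by
      exact_mod_cast Nat.choose_pos (by omega)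
    have hupper : i ≤ i₀ → 0 < dQ n k₀ i - d := fun h =>
      sub_pos.mpr (hlt.trans_le (dQ_le_dQ k₀ hi h (by omega)))
    have hlower : ¬ i ≤ i₀ → 0 ≤ (d : ℚ) - dQ n k₀ i := fun h =>
      sub_nonneg.mpr ((dQ_le_dQ k₀ (by omega) (by omega) hin).trans hle)
    refine ⟨?_, fun h => mul_pos hchoose (hupper h), fun h => mul_pos hchoose
      (sub_pos.mpr ((dQ_lt_dQ k₀ (by omega) h hin).trans_le hle))⟩
    have hint := choose_mul_dQ k₀ hi hin
    set N := (k₀ + (i - 1)).choose (i - 1) * (k₀ + n).choose (n - i)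
    have natCast_of_nonneg : ∀ (q : ℚ) (z : ℤ), q = z → 0 ≤ q → ∃ m : ℕ, q = m := by
      rintro q z rfl hz
      lift z to ℕ using by exact_mod_cast hz
      exact ⟨z, by simp⟩
    split_ifs with h
    · refine natCast_of_nonneg _ (N - (n - 1).choose (i - 1) * d) ?_
        (mul_pos hchoose (hupper h)).le
      rw [mul_sub, hint]
      push_cast
      rfl
    · refine natCast_of_nonneg _ ((n - 1).choose (i - 1) * d - N) ?_
        (mul_nonneg hchoose.le (hlower h))
      rw [mul_sub, hint]
      push_cast
      rfl
end
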